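/- arXiv:1205.2479 — 4 statements merged into one kernel-verified Lean document; each statement's English description precedes it below -/
import Mathlib

section
/- Let (Ω, 𝓕, (𝓕_t)_{t≥0}, P) be a filtered probability space whose filtration is right-continuous (𝓕_t = ⋂_{s>t} 𝓕_s for all t ≥ 0). Let X be a càdlàg process adapted to (𝓕_t), with the convention X_{0−} = X_0 so that ΔX_0 = 0. Let U be an open subset of ℝ. Then T = inf{t ≥ 0 : ΔX_t ∈ U} is a stopping time with respect to (𝓕_t). -/
open MeasureTheory Filter Topology Set
open scoped NNReal ENNReal

/-- If neither `0` nor the jump of a càdlàg path at `s` lies in the closed set `K`, then increments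
of the path over short intervals near `s` avoid `K`. -/
lemma eventually_increment_notMem_of_jump_notMem {x : ℝ≥0 → ℝ} {s : ℝ≥0} {l : ℝ}
    (hr : Tendsto x (𝓝[≥] s) (𝓝 (x s))) (hl : Tendsto x (𝓝[<] s) (𝓝 l))
    {K : Set ℝ} (hK : IsClosed K) (h0 : (0 : ℝ) ∉ K) (hs : x s - l ∉ K) :
    ∀ᶠ z : ℝ≥0 × ℝ≥0 in 𝓝 s ×ˢ 𝓝 s, z.1 < z.2 → x z.2 - x z.1 ∉ K := by
  have key : ∀ {f g : Filter ℝ≥0} {a b : ℝ}, Tendsto x f (𝓝 a) → Tendsto x g (𝓝 b) → b - a ∉ K →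
      ∀ᶠ z : ℝ≥0 × ℝ≥0 in f ×ˢ g, z.1 < z.2 → x z.2 - x z.1 ∉ K := by
    intro f g a b hf hg hab
    have ht : Tendsto (fun z : ℝ≥0 × ℝ≥0 => x z.2 - x z.1) (f ×ˢ g) (𝓝 (b - a)) :=
      (hg.comp tendsto_snd).sub (hf.comp tendsto_fst)
    filter_upwards [ht (hK.isOpen_compl.mem_nhds hab)] with z hz _ using hz
  have hsplit : 𝓝 s = 𝓝[<] s ⊔ 𝓝[≥] s := nhdsLT_sup_nhdsGE s |>.symm
  rw [hsplit, sup_prod, prod_sup, prod_sup]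
  simp only [eventually_sup]
  refine ⟨⟨key hl hl (by simpa using h0), key hl hr hs⟩, ?_, key hr hr (by simpa using h0)⟩
  have h1 : ∀ᶠ z : ℝ≥0 × ℝ≥0 in 𝓝[≥] s ×ˢ 𝓝[<] s, z.1 ∈ Ici s ∧ z.2 ∈ Iio s :=
    Eventually.prod_mk (self_mem_nhdsWithin (s := Ici s)) (self_mem_nhdsWithin (s := Iio s))
  filter_upwards [h1] with z hz hlt
  exact absurd (hlt.trans hz.2) (not_lt.mpr hz.1)

/-- A càdlàg path that has arbitrarily short increments in `K` before time `b` has a jump in `K`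
before time `b`, when `K` is closed and does not contain `0`. -/
lemma exists_jump_mem_of_forall_exists_increment_mem {x xm : ℝ≥0 → ℝ}
    (hr : ∀ s, Tendsto x (𝓝[≥] s) (𝓝 (x s))) (hl : ∀ s, Tendsto x (𝓝[<] s) (𝓝 (xm s)))
    {K : Set ℝ} (hK : IsClosed K) (h0 : (0 : ℝ) ∉ K) {b : ℝ≥0}
    (h : ∀ n : ℕ, ∃ p q : ℝ≥0, p < q ∧ q ≤ b ∧ dist q p < 1 / ((n : ℝ) + 1) ∧ x q - x p ∈ K) :
    ∃ s ≤ b, x s - xm s ∈ K := by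
  by_contra! hno
  have hloc : ∀ s ∈ Iic b, ∃ V : Set ℝ≥0, IsOpen V ∧ s ∈ V ∧
      ∀ p ∈ V, ∀ q ∈ V, p < q → x q - x p ∉ K := by
    intro s hsb
    have he := eventually_increment_notMem_of_jump_notMem (hr s) (hl s) hK h0 (hno s hsb)
    obtain ⟨V, hV, hVK⟩ := (eventually_prod_self_iff
      (r := fun p q => p < q → x q - x p ∉ K)).mp he
    obtain ⟨W, hWV, hWo, hsW⟩ := mem_nhds_iff.mp hV
    exact ⟨W, hWo, hsW, fun p hp q hq => hVK p (hWV hp) q (hWV hq)⟩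
  choose! V hVo hsV hVK using hloc
  have hc : IsCompact (Iic b) := by
    rw [← Icc_bot]
    exact isCompact_Icc
  obtain ⟨δ, hδ, hball⟩ := lebesgue_number_lemma_of_metric (c := fun s : Iic b => V s) hc
    (fun s => hVo s s.2) (fun s hs => mem_iUnion.mpr ⟨⟨s, hs⟩, hsV s hs⟩)
  obtain ⟨n, hn⟩ := exists_nat_one_div_lt hδ
  obtain ⟨p, q, hpq, hqb, hd, hmem⟩ := h n
  obtain ⟨s, hs⟩ := hball p (hpq.le.trans hqb)
  exact hVK s s.2 p (hs (Metric.mem_ball_self hδ)) q (hs (hd.trans hn)) hpq hmem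

/-- A jump in the open set `B` before time `t` produces arbitrarily short increments in `B`, with
endpoints in any given dense set, up to some time `b < t` of the dense set. -/
lemma exists_forall_exists_increment_mem_of_jump_mem {x : ℝ≥0 → ℝ} {s t : ℝ≥0} {l : ℝ}
    (hr : Tendsto x (𝓝[≥] s) (𝓝 (x s))) (hl : Tendsto x (𝓝[<] s) (𝓝 l))
    {D : Set ℝ≥0} (hD : Dense D) {B : Set ℝ} (hB : IsOpen B)
    (hs0 : 0 < s) (hst : s < t) (hs : x s - l ∈ B) :
    ∃ b ∈ D, b < t ∧ ∀ n : ℕ, ∃ p ∈ D, ∃ q ∈ D,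
      p < q ∧ q ≤ b ∧ dist q p < 1 / ((n : ℝ) + 1) ∧ x q - x p ∈ B := by
  obtain ⟨b, hbD, hsb, hbt⟩ := hD.exists_between hst
  refine ⟨b, hbD, hbt, fun n => ?_⟩
  have hn : (0 : ℝ) < 1 / ((n : ℝ) + 1) := by positivity
  have hinc : Tendsto (fun z : ℝ≥0 × ℝ≥0 => x z.2 - x z.1) (𝓝[<] s ×ˢ 𝓝[>] s) (𝓝 (x s - l)) :=
    ((hr.mono_left (nhdsWithin_mono _ Ioi_subset_Ici_self)).comp tendsto_snd).sub
      (hl.comp tendsto_fst)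
  have hdist : Tendsto (fun z : ℝ≥0 × ℝ≥0 => dist z.2 z.1) (𝓝[<] s ×ˢ 𝓝[>] s) (𝓝 (dist s s)) :=
    (tendsto_snd.mono_right nhdsWithin_le_nhds).dist (tendsto_fst.mono_right nhdsWithin_le_nhds)
  rw [dist_self] at hdist
  obtain ⟨S, hS, R, hR, hSR⟩ := mem_prod_iff.mp
    (inter_mem (hinc (hB.mem_nhds hs)) (hdist (Iio_mem_nhds hn)))
  obtain ⟨a, has, haS⟩ := (mem_nhdsLT_iff_exists_Ioo_subset' hs0).mp hS
  obtain ⟨c, hsc, hcR⟩ := (mem_nhdsGT_iff_exists_Ioo_subset' hsb).mp hR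
  obtain ⟨p, hpD, hap, hps⟩ := hD.exists_between (mem_Iio.mp has)
  obtain ⟨q, hqD, hsq, hqc⟩ := hD.exists_between (lt_min (mem_Ioi.mp hsc) hsb)
  obtain ⟨hmem, hd⟩ := hSR (mk_mem_prod (haS ⟨hap, hps⟩)
    (hcR ⟨hsq, hqc.trans_le (min_le_left _ _)⟩))
  exact ⟨p, hpD, q, hqD, hps.trans hsq, hqc.le.trans (min_le_right _ _), hd, hmem⟩

/-- The event that a càdlàg process has a jump in the open set `U`, with `0 ∉ U`, strictly before
time `t` is determined by the process strictly before time `t`. -/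
lemma measurableSet_exists_jump_mem_lt {Ω : Type*} {m : MeasurableSpace Ω} {X Xm : ℝ≥0 → Ω → ℝ}
    {t : ℝ≥0} (hX : ∀ s < t, Measurable (X s))
    (hr : ∀ ω s, Tendsto (fun u => X u ω) (𝓝[≥] s) (𝓝 (X s ω)))
    (hl : ∀ ω s, Tendsto (fun u => X u ω) (𝓝[<] s) (𝓝 (Xm s ω)))
    (hX0 : ∀ ω, Xm 0 ω = X 0 ω) {U : Set ℝ} (hU : IsOpen U) (h0 : (0 : ℝ) ∉ U) :
    MeasurableSet {ω | ∃ s < t, X s ω - Xm s ω ∈ U} := by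
  obtain ⟨D, hDc, hD⟩ := TopologicalSpace.exists_countable_dense ℝ≥0
  let 𝓑 : Set (Set ℝ) := {B ∈ TopologicalSpace.countableBasis ℝ | closure B ⊆ U}
  have h𝓑c : 𝓑.Countable := (TopologicalSpace.countable_countableBasis ℝ).mono (sep_subset _ _)
  have heq : {ω | ∃ s < t, X s ω - Xm s ω ∈ U} =
      ⋃ B ∈ 𝓑, ⋃ b ∈ {b ∈ D | b < t}, ⋂ n : ℕ, ⋃ p ∈ D,
        ⋃ q ∈ {q ∈ D | p < q ∧ q ≤ b ∧ dist q p < 1 / ((n : ℝ) + 1)},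
          {ω | X q ω - X p ω ∈ B} := by
    ext ω
    simp only [mem_ofPred_eq, mem_iUnion, mem_iInter, exists_prop]
    constructor
    · rintro ⟨s, hst, hs⟩
      have hs0 : 0 < s := by
        refine pos_iff_ne_zero.mpr ?_
        rintro rfl
        rw [hX0, sub_self] at hs
        exact h0 hs
      obtain ⟨B, hB, hsB, hBU⟩ :=
        (TopologicalSpace.isBasis_countableBasis ℝ).exists_closure_subset (hU.mem_nhds hs)
      obtain ⟨b, hbD, hbt, h⟩ := exists_forall_exists_increment_mem_of_jump_mem (hr ω s) (hl ω s) hD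
        (TopologicalSpace.isOpen_of_mem_countableBasis hB) hs0 hst hsB
      refine ⟨B, ⟨hB, hBU⟩, b, ⟨hbD, hbt⟩, fun n => ?_⟩
      obtain ⟨p, hp, q, hq, hpq, hqb, hd, hmem⟩ := h n
      exact ⟨p, hp, q, ⟨hq, hpq, hqb, hd⟩, hmem⟩
    · rintro ⟨B, ⟨-, hBU⟩, b, ⟨-, hbt⟩, h⟩
      obtain ⟨s, hsb, hs⟩ := exists_jump_mem_of_forall_exists_increment_mem (hr ω) (hl ω)
        (isClosed_closure (s := B)) (fun h => h0 (hBU h)) (b := b) (fun n => by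
          obtain ⟨p, -, q, ⟨-, hpq, hqb, hd⟩, hmem⟩ := h n
          exact ⟨p, q, hpq, hqb, hd, subset_closure hmem⟩)
      exact ⟨s, hsb.trans_lt hbt, hBU hs⟩
  rw [heq]
  refine .biUnion h𝓑c fun B hB => .biUnion (hDc.mono (sep_subset _ _)) fun b hb =>
    .iInter fun n => .biUnion hDc fun p _ => .biUnion (hDc.mono (sep_subset _ _)) fun q hq => ?_
  have hqt : q < t := hq.2.2.1.trans_lt hb.2
  exact ((hX q hqt).sub (hX p (hq.2.1.trans hqt)))
    (TopologicalSpace.isOpen_of_mem_countableBasis hB.1).measurableSet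

/-- For a right-continuous filtration, `{T ≤ t} ∈ 𝓕 t` for all `t` as soon as `{T < t} ∈ 𝓕 t` for
all `t`. -/
lemma measurableSet_le_of_measurableSet_lt {Ω : Type*} {mΩ : MeasurableSpace Ω}
    {𝓕 : Filtration ℝ≥0 mΩ}
    (hright : ∀ t : ℝ≥0, (𝓕 t : MeasurableSpace Ω) = ⨅ (s : ℝ≥0) (_ : t < s), 𝓕 s)
    {T : Ω → ℝ≥0∞} (hT : ∀ t : ℝ≥0, MeasurableSet[𝓕 t] {ω | T ω < t}) (t : ℝ≥0) :
    MeasurableSet[𝓕 t] {ω | T ω ≤ t} := by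
  rw [hright t]
  simp only [MeasurableSpace.measurableSet_iInf]
  intro s hts
  obtain ⟨u, -, hu, hlim⟩ := exists_seq_strictAnti_tendsto' hts
  have heq : {ω | T ω ≤ t} = ⋂ n, {ω | T ω < u n} := by
    ext ω
    simp only [mem_ofPred_eq, mem_iInter]
    refine ⟨fun h n => h.trans_lt (ENNReal.coe_lt_coe.mpr (hu n).1), fun h => ?_⟩
    exact ge_of_tendsto' (ENNReal.tendsto_coe.mpr hlim) fun n => (h n).le
  rw [heq]
  exact MeasurableSet.iInter fun n => 𝓕.mono (hu n).2.le _ (hT (u n))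

/-- Let `(Ω, 𝓕, (𝓕 t)_{t ≥ 0}, P)` be a filtered probability space with right-continuous
filtration. Let `X` be a càdlàg adapted real-valued process (with left limits `Xm`, where by
convention `Xm 0 = X 0`, so the jump at time `0` is `0`), let `U ⊆ ℝ` be open, and let
`T = inf {t ≥ 0 | X t - Xm t ∈ U}` (with `inf ∅ = ∞`). Then `T` is a stopping time, i.e.
`{T ≤ t} ∈ 𝓕 t` for all `t ≥ 0`. -/
theorem first_hitting_time_of_open_set_by_jump_process_is_stopping_time
    {Ω : Type*} {mΩ : MeasurableSpace Ω} (P : Measure Ω) [IsProbabilityMeasure P]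
    (𝓕 : Filtration ℝ≥0 mΩ)
    (hright : ∀ t : ℝ≥0, (𝓕 t : MeasurableSpace Ω) = ⨅ (s : ℝ≥0) (_ : t < s), 𝓕 s)
    (X Xm : ℝ≥0 → Ω → ℝ)
    (hadapted : Adapted 𝓕 X)
    (hrc : ∀ ω, ∀ s : ℝ≥0, Tendsto (fun u => X u ω) (𝓝[≥] s) (𝓝 (X s ω)))
    (hll : ∀ ω, ∀ s : ℝ≥0, 0 < s → Tendsto (fun u => X u ω) (𝓝[<] s) (𝓝 (Xm s ω)))
    (hX0 : ∀ ω, Xm 0 ω = X 0 ω)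
    (U : Set ℝ) (hU : IsOpen U)
    (T : Ω → ℝ≥0∞)
    (hT : ∀ ω, T ω = ⨅ (t : ℝ≥0) (_ : X t ω - Xm t ω ∈ U), (t : ℝ≥0∞)) :
    ∀ t : ℝ≥0, MeasurableSet[𝓕 t] {ω | T ω ≤ (t : ℝ≥0∞)} := by
  by_cases h0 : (0 : ℝ) ∈ U
  · intro t
    have hzero : ∀ ω, T ω = 0 := fun ω => by
      rw [hT, ← nonpos_iff_eq_zero]
      exact iInf₂_le (0 : ℝ≥0) (by simpa [hX0 ω] using h0)
    simp [hzero]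
  refine measurableSet_le_of_measurableSet_lt hright fun t => ?_
  have heq : {ω | T ω < t} = {ω | ∃ s < t, X s ω - Xm s ω ∈ U} := by
    ext ω
    simp only [mem_ofPred_eq, hT, iInf_lt_iff, ENNReal.coe_lt_coe, exists_prop, and_comm]
  have hl : ∀ ω s, Tendsto (fun u => X u ω) (𝓝[<] s) (𝓝 (Xm s ω)) := fun ω s => by
    rcases eq_or_ne s 0 with rfl | hs
    · simp
    · exact hll ω s (pos_iff_ne_zero.mpr hs)
  rw [heq]
  exact measurableSet_exists_jump_mem_lt (fun s hs => (hadapted s).mono (𝓕.mono hs.le) le_rfl)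
    hrc hl hX0 hU h0
end

section
/- Let X be a càdlàg process adapted to a filtration (𝓕_t)_{t≥0} (no right-continuity of the filtration assumed), with the convention X_{0−} = X_0. Let U be an open subset of ℝ with 0 ∉ U, and let T = inf{t ≥ 0 : ΔX_t ∈ U}. Then for every t > 0, the event {T < t} = {ω : ∃ s ∈ (0,t) with X_s(ω) − X_{s−}(ω) ∈ U} belongs to 𝓕_t. -/
open MeasureTheory Filter Topology Set
open scoped NNReal ENNReal

/-- If `p n` and `r n` converge to `s` along an ultrafilter with `p n < r n`, then the increments
of a càdlàg path `f` over `[p n, r n]` converge to `0` or to the jump of `f` at `s > 0`. -/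
lemma tendsto_increment_of_cadlag {ι : Type*} {f g : ℝ≥0 → ℝ}
    (hrc : ∀ s, Tendsto f (𝓝[≥] s) (𝓝 (f s)))
    (hll : ∀ s, 0 < s → Tendsto f (𝓝[<] s) (𝓝 (g s)))
    (l : Ultrafilter ι) {p r : ι → ℝ≥0} {s : ℝ≥0} (hpr : ∀ n, p n < r n)
    (hp : Tendsto p l (𝓝 s)) (hr : Tendsto r l (𝓝 s)) :
    Tendsto (fun n => f (r n) - f (p n)) l (𝓝 0) ∨
      0 < s ∧ Tendsto (fun n => f (r n) - f (p n)) l (𝓝 (f s - g s)) := by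
  have right {x : ι → ℝ≥0} (hx : Tendsto x l (𝓝 s)) (h : ∀ᶠ n in l, s ≤ x n) :
      Tendsto (fun n => f (x n)) l (𝓝 (f s)) :=
    (hrc s).comp (tendsto_nhdsWithin_iff.2 ⟨hx, h⟩)
  have left {x : ι → ℝ≥0} (hx : Tendsto x l (𝓝 s)) (h : ∀ᶠ n in l, x n < s) :
      0 < s ∧ Tendsto (fun n => f (x n)) l (𝓝 (g s)) := by
    obtain ⟨n, hn⟩ := h.exists
    have hs : 0 < s := zero_le.trans_lt hn
    exact ⟨hs, (hll s hs).comp (tendsto_nhdsWithin_iff.2 ⟨hx, h⟩)⟩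
  rcases Ultrafilter.eventually_or.1 (Eventually.of_forall fun n => le_or_gt s (p n)) with h | h
  · left
    simpa using (right hr (h.mono fun n hn => hn.trans (hpr n).le)).sub (right hp h)
  · obtain ⟨hs, hfp⟩ := left hp h
    rcases Ultrafilter.eventually_or.1 (Eventually.of_forall fun n => le_or_gt s (r n))
      with h' | h'
    · exact Or.inr ⟨hs, (right hr h').sub hfp⟩
    · left
      simpa using (left hr h').2.sub hfp

/-- A càdlàg path has a jump in the open set `U ∌ 0` before time `t` iff it has increments over
arbitrarily short intervals, with endpoints in a dense set, that lie well inside `U`. -/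
lemma exists_jump_mem_iff {f g : ℝ≥0 → ℝ}
    (hrc : ∀ s, Tendsto f (𝓝[≥] s) (𝓝 (f s)))
    (hll : ∀ s, 0 < s → Tendsto f (𝓝[<] s) (𝓝 (g s)))
    {U : Set ℝ} (hU : IsOpen U) (hU0 : (0 : ℝ) ∉ U) {D : Set ℝ≥0} (hD : Dense D) (t : ℝ≥0) :
    (∃ s, 0 < s ∧ s < t ∧ f s - g s ∈ U) ↔
      ∃ B ∈ TopologicalSpace.countableBasis ℝ, closure B ⊆ U ∧ ∃ q ∈ D, q < t ∧
        ∀ n : ℕ, ∃ p ∈ D, ∃ r ∈ D, p < r ∧ r ≤ q ∧ r ≤ p + 1 / ((n : ℝ≥0) + 1) ∧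
          f r - f p ∈ B := by
  constructor
  · rintro ⟨s, hs, hst, hsU⟩
    obtain ⟨B, hB, hsB, hBU⟩ :=
      (TopologicalSpace.isBasis_countableBasis ℝ).exists_closure_subset (hU.mem_nhds hsU)
    obtain ⟨q, hqD, hsq, hqt⟩ := hD.exists_between hst
    refine ⟨B, hB, hBU, q, hqD, hqt, fun n => ?_⟩
    have hBo : IsOpen B := TopologicalSpace.isOpen_of_mem_countableBasis hB
    have hε : (0 : ℝ≥0) < 1 / ((n : ℝ≥0) + 1) := by positivity
    have hlim : Tendsto (fun x : ℝ≥0 × ℝ≥0 => f x.2 - f x.1) (𝓝[<] s ×ˢ 𝓝[≥] s)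
        (𝓝 (f s - g s)) :=
      ((hrc s).comp tendsto_snd).sub ((hll s hs).comp tendsto_fst)
    have hshort : ∀ᶠ x : ℝ≥0 × ℝ≥0 in 𝓝[<] s ×ˢ 𝓝[≥] s, x.2 < x.1 + 1 / ((n : ℝ≥0) + 1) := by
      have h₁ : Tendsto (fun x : ℝ≥0 × ℝ≥0 => x.1 + 1 / ((n : ℝ≥0) + 1)) (𝓝[<] s ×ˢ 𝓝[≥] s)
          (𝓝 (s + 1 / ((n : ℝ≥0) + 1))) :=
        ((tendsto_nhdsWithin_of_tendsto_nhds tendsto_id).comp tendsto_fst).add_const _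
      have h₂ : Tendsto (fun x : ℝ≥0 × ℝ≥0 => x.2) (𝓝[<] s ×ˢ 𝓝[≥] s) (𝓝 s) :=
        (tendsto_nhdsWithin_of_tendsto_nhds tendsto_id).comp tendsto_snd
      exact h₂.eventually_lt h₁ (lt_add_of_pos_right s hε)
    obtain ⟨P, hP, R, hR, hPR⟩ := eventually_prod_iff.1
      ((hlim.eventually (hBo.mem_nhds hsB)).and hshort)
    obtain ⟨a, ha, haP⟩ := (mem_nhdsLT_iff_exists_Ioo_subset' hs).1 hP
    obtain ⟨b, hb, hbR⟩ := (mem_nhdsGE_iff_exists_Ico_subset' hsq).1 hR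
    obtain ⟨p, hpD, hap, hps⟩ := hD.exists_between ha
    obtain ⟨r, hrD, hsr, hrb⟩ := hD.exists_between (lt_min hb hsq)
    obtain ⟨hmem, hlt⟩ := hPR (haP ⟨hap, hps⟩) (hbR ⟨hsr.le, hrb.trans_le (min_le_left _ _)⟩)
    exact ⟨p, hpD, r, hrD, hps.trans hsr, (hrb.trans_le (min_le_right _ _)).le, hlt.le, hmem⟩
  · rintro ⟨B, -, hBU, q, -, hqt, h⟩
    choose p _ r _ hpr hrq hclose hmem using h
    obtain ⟨s, hs, hps⟩ := isCompact_Icc.ultrafilter_le_nhds ((hyperfilter ℕ).map p)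
      (show (_ : Filter ℝ≥0) ≤ 𝓟 (Icc 0 q) from tendsto_principal.2 <|
        Eventually.of_forall fun n => ⟨zero_le, (hpr n).le.trans (hrq n)⟩)
    have hp : Tendsto p (hyperfilter ℕ) (𝓝 s) := hps
    have hε : Tendsto (fun n : ℕ => 1 / ((n : ℝ≥0) + 1)) (hyperfilter ℕ) (𝓝 0) :=
      tendsto_one_div_add_atTop_nhds_zero_nat.mono_left Nat.hyperfilter_le_atTop
    have hr : Tendsto r (hyperfilter ℕ) (𝓝 s) :=
      tendsto_of_tendsto_of_tendsto_of_le_of_le hp (by simpa using hp.add hε)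
        (fun n => (hpr n).le) hclose
    have key {y : ℝ} (hy : Tendsto (fun n => f (r n) - f (p n)) (hyperfilter ℕ) (𝓝 y)) : y ∈ U :=
      hBU (mem_closure_of_tendsto hy (Eventually.of_forall hmem))
    rcases tendsto_increment_of_cadlag hrc hll (hyperfilter ℕ) hpr hp hr with h0 | ⟨hs0, hj⟩
    · exact absurd (key h0) hU0
    · exact ⟨s, hs0, hs.2.trans_lt hqt, key hj⟩

/-- Let `X` be a càdlàg adapted process (no right-continuity assumed on the filtration),
with left limits `Xm` and the convention `Xm 0 = X 0`. Let `U ⊆ ℝ` be open with `0 ∉ U`, and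
let `T = inf {t ≥ 0 | X t - Xm t ∈ U}` (with `inf ∅ = ∞`). Then for every `t > 0`, the event
`{T < t}` equals `{ω | ∃ s ∈ (0, t), X s ω - Xm s ω ∈ U}` and belongs to `𝓕 t`. -/
theorem first_hitting_lt_mem_filtration
    {Ω : Type*} {mΩ : MeasurableSpace Ω} (P : Measure Ω) [IsProbabilityMeasure P]
    (𝓕 : Filtration ℝ≥0 mΩ)
    (X Xm : ℝ≥0 → Ω → ℝ)
    (hadapted : Adapted 𝓕 X)
    (hrc : ∀ ω, ∀ s : ℝ≥0, Tendsto (fun u => X u ω) (𝓝[≥] s) (𝓝 (X s ω)))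
    (hll : ∀ ω, ∀ s : ℝ≥0, 0 < s → Tendsto (fun u => X u ω) (𝓝[<] s) (𝓝 (Xm s ω)))
    (hX0 : ∀ ω, Xm 0 ω = X 0 ω)
    (U : Set ℝ) (hU : IsOpen U) (hU0 : (0 : ℝ) ∉ U)
    (T : Ω → ℝ≥0∞)
    (hT : ∀ ω, T ω = ⨅ (s : ℝ≥0) (_ : X s ω - Xm s ω ∈ U), (s : ℝ≥0∞))
    (t : ℝ≥0) (ht : 0 < t) :
    {ω | T ω < (t : ℝ≥0∞)} = {ω | ∃ s : ℝ≥0, 0 < s ∧ s < t ∧ X s ω - Xm s ω ∈ U} ∧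
      MeasurableSet[𝓕 t] {ω | T ω < (t : ℝ≥0∞)} := by
  have hset : {ω | T ω < (t : ℝ≥0∞)} =
      {ω | ∃ s : ℝ≥0, 0 < s ∧ s < t ∧ X s ω - Xm s ω ∈ U} := by
    ext ω
    simp only [mem_ofPred_eq, hT, iInf_lt_iff, ENNReal.coe_lt_coe, exists_prop]
    refine exists_congr fun s => ⟨fun ⟨hsU, hst⟩ => ⟨pos_iff_ne_zero.2 ?_, hst, hsU⟩,
      fun ⟨_, hst, hsU⟩ => ⟨hsU, hst⟩⟩
    rintro rfl
    exact hU0 (by simpa [hX0] using hsU)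
  refine ⟨hset, ?_⟩
  obtain ⟨D, hDc, hD⟩ := TopologicalSpace.exists_countable_dense ℝ≥0
  simp only [hset, fun ω => exists_jump_mem_iff (hrc ω) (hll ω) hU hU0 hD t]
  simp only [← exists_prop, ofPred_exists, ofPred_forall]
  refine MeasurableSet.biUnion (TopologicalSpace.countable_countableBasis ℝ) fun B hB =>
    .iUnion fun _ => .biUnion hDc fun q _ => .iUnion fun hqt => .iInter fun n =>
    .biUnion hDc fun p _ => .biUnion hDc fun r _ => .iUnion fun hpr => .iUnion fun hrq =>
    .iUnion fun _ => ?_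
  have hrt : r ≤ t := hrq.trans hqt.le
  exact (((hadapted r).mono (𝓕.mono hrt) le_rfl).sub
    ((hadapted p).mono (𝓕.mono (hpr.le.trans hrt)) le_rfl))
    (TopologicalSpace.isOpen_of_mem_countableBasis hB).measurableSet
end

section
/- Let x : [0,∞) → ℝ be a càdlàg function with x(0−) := x(0), let t > 0, and let U ⊆ ℝ be an open set with 0 ∉ U. For m ≥ 1 set F_m = {z ∈ ℝ : |z − y| ≥ 1/m for all y ∈ Uᶜ}, and for k ≥ 1 set Θ_k = {(p,q) ∈ ℚ² : 0 < p < q < t and |p − q| ≤ 1/k}. Then the following are equivalent: (i) there exists s ∈ (0,t) with x(s) − x(s−) ∈ U; (ii) there exist m ≥ 1 and n ≥ 1 such that for every k ≥ n there exists (p,q) ∈ Θ_k with x(q) − x(p) ∈ F_m. -/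
open Filter Topology Set

/-- Near a point of `[0, ∞)`, a càdlàg function is close to its value on the right and to its
left limit on the left. -/
lemma exists_forall_abs_sub_lt_of_cadlag {x xm : ℝ → ℝ}
    (hrc : ∀ s : ℝ, 0 ≤ s → Tendsto x (𝓝[≥] s) (𝓝 (x s)))
    (hll : ∀ s : ℝ, 0 < s → Tendsto x (𝓝[<] s) (𝓝 (xm s)))
    {s ε : ℝ} (hs : 0 ≤ s) (hε : 0 < ε) :
    ∃ δ > 0, (∀ u, s ≤ u → |u - s| < δ → |x u - x s| < ε) ∧
      ∀ u, 0 < u → u < s → |u - s| < δ → |x u - xm s| < ε := by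
  obtain ⟨δ₁, hδ₁, hright⟩ := Metric.tendsto_nhdsWithin_nhds.1 (hrc s hs) ε hε
  simp only [Real.dist_eq] at hright
  rcases hs.eq_or_lt with rfl | hs
  · exact ⟨δ₁, hδ₁, fun u hu h ↦ hright hu h, fun u hu hu' ↦ absurd hu hu'.not_gt⟩
  · obtain ⟨δ₂, hδ₂, hleft⟩ := Metric.tendsto_nhdsWithin_nhds.1 (hll s hs) ε hε
    simp only [Real.dist_eq] at hleft
    exact ⟨min δ₁ δ₂, lt_min hδ₁ hδ₂, fun u hu h ↦ hright hu (h.trans_le (min_le_left _ _)),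
      fun u _ hu h ↦ hleft hu (h.trans_le (min_le_right _ _))⟩

/-- If a càdlàg function has no jump in `U` on `(0, t)`, then near each point of `[0, ∞)` its
increments inside `(0, t)` are close to the complement of `U`. -/
lemma exists_forall_increment_near_compl {x xm : ℝ → ℝ}
    (hrc : ∀ s : ℝ, 0 ≤ s → Tendsto x (𝓝[≥] s) (𝓝 (x s)))
    (hll : ∀ s : ℝ, 0 < s → Tendsto x (𝓝[<] s) (𝓝 (xm s)))
    {t : ℝ} {U : Set ℝ} (hU0 : (0 : ℝ) ∉ U)
    (hjump : ∀ s, 0 < s → s < t → x s - xm s ∉ U)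
    {s ε : ℝ} (hs : 0 ≤ s) (hε : 0 < ε) :
    ∃ δ > 0, ∀ p q, 0 < p → p < q → q < t → |p - s| < δ → |q - s| < δ →
      ∃ y ∉ U, |x q - x p - y| < ε := by
  obtain ⟨δ, hδ, hright, hleft⟩ := exists_forall_abs_sub_lt_of_cadlag hrc hll hs (half_pos hε)
  refine ⟨δ, hδ, fun p q hp hpq hqt hps hqs ↦ ?_⟩
  rcases le_or_gt s p with h | h
  · have h₁ := abs_lt.1 (hright p h hps)
    have h₂ := abs_lt.1 (hright q (h.trans hpq.le) hqs)
    exact ⟨0, hU0, abs_lt.2 ⟨by linarith, by linarith⟩⟩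
  have h₁ := abs_lt.1 (hleft p hp h hps)
  rcases le_or_gt s q with h' | h'
  · have h₂ := abs_lt.1 (hright q h' hqs)
    exact ⟨x s - xm s, hjump s (hp.trans h) (h'.trans_lt hqt),
      abs_lt.2 ⟨by linarith, by linarith⟩⟩
  · have h₂ := abs_lt.1 (hleft q (hp.trans hpq) h' hqs)
    exact ⟨0, hU0, abs_lt.2 ⟨by linarith, by linarith⟩⟩

/-- Let `x : [0,∞) → ℝ` be càdlàg with left limits `xm` and convention `xm 0 = x 0`, let
`t > 0`, and let `U ⊆ ℝ` be open with `0 ∉ U`. With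
`F m = {z : ℝ | ∀ y ∉ U, 1/m ≤ |z - y|}` and
`Θ k = {(p, q) ∈ ℚ² | 0 < p < q < t, |p - q| ≤ 1/k}`, the following are equivalent:
(i) there is `s ∈ (0, t)` with `x s - xm s ∈ U`;
(ii) there are `m, n ≥ 1` such that for every `k ≥ n` there is `(p, q) ∈ Θ k` with
`x q - x p ∈ F m`. -/
theorem jump_in_open_iff_increments_in_closed_approx
    (x xm : ℝ → ℝ)
    (hrc : ∀ s : ℝ, 0 ≤ s → Tendsto x (𝓝[≥] s) (𝓝 (x s)))
    (hll : ∀ s : ℝ, 0 < s → Tendsto x (𝓝[<] s) (𝓝 (xm s)))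
    (hx0 : xm 0 = x 0)
    (t : ℝ) (ht : 0 < t)
    (U : Set ℝ) (hU : IsOpen U) (hU0 : (0 : ℝ) ∉ U) :
    (∃ s : ℝ, 0 < s ∧ s < t ∧ x s - xm s ∈ U) ↔
      (∃ m : ℕ, 1 ≤ m ∧ ∃ n : ℕ, 1 ≤ n ∧ ∀ k : ℕ, n ≤ k →
        ∃ p q : ℚ, 0 < p ∧ p < q ∧ (q : ℝ) < t ∧ |(p : ℝ) - (q : ℝ)| ≤ 1 / (k : ℝ) ∧
          ∀ y : ℝ, y ∉ U → 1 / (m : ℝ) ≤ |x (q : ℝ) - x (p : ℝ) - y|) := by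
  constructor
  · rintro ⟨s, hs, hst, hsU⟩
    obtain ⟨ε, hε, hball⟩ := Metric.isOpen_iff.1 hU _ hsU
    obtain ⟨M, hM⟩ := exists_nat_one_div_lt (half_pos hε)
    obtain ⟨δ, hδ, hright, hleft⟩ :=
      exists_forall_abs_sub_lt_of_cadlag hrc hll hs.le (half_pos (half_pos hε))
    refine ⟨M + 1, by omega, 1, le_rfl, fun k hk ↦ ?_⟩
    have hk' : 0 < 1 / (k : ℝ) := one_div_pos.2 (by exact_mod_cast hk)
    obtain ⟨p, hp, hps⟩ := exists_rat_btwn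
      (show max 0 (max (s - δ) (s - 1 / (k : ℝ) / 2)) < s from
        max_lt hs (max_lt (by linarith) (by linarith)))
    obtain ⟨q, hsq, hq⟩ := exists_rat_btwn
      (show s < min t (min (s + δ) (s + 1 / (k : ℝ) / 2)) from
        lt_min hst (lt_min (by linarith) (by linarith)))
    simp only [max_lt_iff] at hp
    simp only [lt_min_iff] at hq
    obtain ⟨hp0, hpδ, hpk⟩ := hp
    obtain ⟨hqt, hqδ, hqk⟩ := hq
    refine ⟨p, q, by exact_mod_cast hp0, by exact_mod_cast hps.trans hsq, hqt,
      abs_le.2 ⟨by linarith, by linarith⟩, fun y hy ↦ ?_⟩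
    have h₁ := abs_lt.1 (hleft p hp0 hps (abs_lt.2 ⟨by linarith, by linarith⟩))
    have h₂ := abs_lt.1 (hright q hsq.le (abs_lt.2 ⟨by linarith, by linarith⟩))
    have hy' : ε ≤ |x s - xm s - y| := by
      by_contra! h
      exact hy (hball (by rwa [Metric.mem_ball, Real.dist_eq, abs_sub_comm]))
    push_cast
    refine hM.le.trans ?_
    rcases le_abs.1 hy' with h | h
    · exact le_abs.2 (Or.inl (by linarith))
    · exact le_abs.2 (Or.inr (by linarith))
  · rintro ⟨m, hm, n, hn, hinc⟩
    by_contra! hjump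
    have hm' : 0 < 1 / (m : ℝ) := one_div_pos.2 (by exact_mod_cast hm)
    choose! r hr hnear using fun s (hs : 0 ≤ s) ↦
      exists_forall_increment_near_compl hrc hll hU0 hjump hs hm'
    obtain ⟨δ, hδ, hleb⟩ := lebesgue_number_lemma_of_metric (isCompact_Icc (a := 0) (b := t))
      (c := fun s : Icc 0 t ↦ Metric.ball (s : ℝ) (r s)) (fun _ ↦ Metric.isOpen_ball)
      (fun s hs ↦ mem_iUnion.2 ⟨⟨s, hs⟩, Metric.mem_ball_self (hr s hs.1)⟩)
    obtain ⟨K, hK⟩ := exists_nat_one_div_lt hδ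
    obtain ⟨p, q, hp, hpq, hqt, hpqk, hF⟩ := hinc (max n (K + 1)) (le_max_left _ _)
    have hp' : (0 : ℝ) < p := by exact_mod_cast hp
    have hpq' : (p : ℝ) < q := by exact_mod_cast hpq
    obtain ⟨s, hs⟩ := hleb p ⟨hp'.le, (hpq'.trans hqt).le⟩
    have hdist : |(q : ℝ) - p| < δ := by
      rw [abs_sub_comm]
      refine hpqk.trans_lt (lt_of_le_of_lt ?_ hK)
      exact one_div_le_one_div_of_le (by positivity) (by exact_mod_cast le_max_right n (K + 1))
    obtain ⟨y, hy, hlt⟩ := hnear s s.2.1 p q hp' hpq' hqt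
      (hs (Metric.mem_ball_self hδ)) (hs hdist)
    exact (hF y hy).not_gt hlt
end

section
/- Let x : [0,∞) → ℝ be a càdlàg function with x(0−) := x(0), let t > 0, and let F ⊆ ℝ be a closed set with 0 ∉ F. Suppose (p_k)_{k≥1} and (q_k)_{k≥1} are monotone sequences of real numbers with 0 < p_k < q_k < t for all k, |p_k − q_k| → 0, and x(q_k) − x(p_k) ∈ F for all k. Then both sequences converge to a common limit s satisfying 0 < s < t, and moreover lim_k x(p_k) = x(s−), lim_k x(q_k) = x(s), and x(s) − x(s−) ∈ F. -/
open Filter Topology Set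

/-- A monotone or antitone real sequence converging to `s` eventually stays on one side of `s`. -/
lemma eventually_le_or_eventually_lt_of_tendsto {u : ℕ → ℝ} {s : ℝ}
    (hu : Monotone u ∨ Antitone u) (hs : Tendsto u atTop (𝓝 s)) :
    (∀ᶠ k in atTop, s ≤ u k) ∨ (∀ᶠ k in atTop, u k < s) := by
  rcases hu with hu | hu
  · by_cases h : ∃ n, s ≤ u n
    · obtain ⟨n, hn⟩ := h
      exact Or.inl (eventually_atTop.2 ⟨n, fun k hk => hn.trans (hu hk)⟩)
    · push Not at h
      exact Or.inr (Eventually.of_forall h)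
  · exact Or.inl (Eventually.of_forall (hu.le_of_tendsto hs))

/-- A monotone or antitone real sequence with values in `[a, b]` converges. -/
lemma exists_tendsto_of_monotone_or_antitone {u : ℕ → ℝ} {a b : ℝ}
    (hu : Monotone u ∨ Antitone u) (ha : ∀ k, a ≤ u k) (hb : ∀ k, u k ≤ b) :
    ∃ s, Tendsto u atTop (𝓝 s) := by
  rcases hu with hu | hu
  · exact ⟨_, tendsto_atTop_ciSup hu ⟨b, forall_mem_range.2 hb⟩⟩
  · exact ⟨_, tendsto_atTop_ciInf hu ⟨a, forall_mem_range.2 ha⟩⟩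

/-- Let `x : [0,∞) → ℝ` be càdlàg with left limits `xm` and convention `xm 0 = x 0`, let
`t > 0`, and let `F ⊆ ℝ` be closed with `0 ∉ F`. If `(p k)` and `(q k)` are monotone
sequences with `0 < p k < q k < t`, `|p k - q k| → 0` and `x (q k) - x (p k) ∈ F` for all
`k`, then both sequences converge to a common limit `s ∈ (0, t)` with
`x (p k) → xm s`, `x (q k) → x s`, and `x s - xm s ∈ F`. -/
theorem jump_in_closed_set_of_increments_in_closed_set
    (x xm : ℝ → ℝ)
    (hrc : ∀ s : ℝ, 0 ≤ s → Tendsto x (𝓝[≥] s) (𝓝 (x s)))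
    (hll : ∀ s : ℝ, 0 < s → Tendsto x (𝓝[<] s) (𝓝 (xm s)))
    (hx0 : xm 0 = x 0)
    (t : ℝ) (ht : 0 < t)
    (F : Set ℝ) (hF : IsClosed F) (hF0 : (0 : ℝ) ∉ F)
    (p q : ℕ → ℝ)
    (hpmono : Monotone p ∨ Antitone p) (hqmono : Monotone q ∨ Antitone q)
    (hp0 : ∀ k, 0 < p k) (hpq : ∀ k, p k < q k) (hqt : ∀ k, q k < t)
    (hdist : Tendsto (fun k => |p k - q k|) atTop (𝓝 0))
    (hmem : ∀ k, x (q k) - x (p k) ∈ F) :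
    ∃ s : ℝ, 0 < s ∧ s < t ∧
      Tendsto p atTop (𝓝 s) ∧ Tendsto q atTop (𝓝 s) ∧
      Tendsto (fun k => x (p k)) atTop (𝓝 (xm s)) ∧
      Tendsto (fun k => x (q k)) atTop (𝓝 (x s)) ∧
      x s - xm s ∈ F := by
  obtain ⟨s, hps⟩ := exists_tendsto_of_monotone_or_antitone hpmono (fun k => (hp0 k).le)
    (fun k => ((hpq k).trans (hqt k)).le)
  have hqs : Tendsto q atTop (𝓝 s) := by
    simpa using hps.sub ((tendsto_zero_iff_abs_tendsto_zero _).2 hdist)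
  have hs0 : 0 ≤ s := ge_of_tendsto' hps fun k => (hp0 k).le
  have right_limit {u : ℕ → ℝ} (hu : Tendsto u atTop (𝓝 s)) (h : ∀ᶠ k in atTop, s ≤ u k) :
      Tendsto (fun k => x (u k)) atTop (𝓝 (x s)) :=
    (hrc s hs0).comp (tendsto_nhdsWithin_iff.2 ⟨hu, h⟩)
  have limit_mem {a b : ℝ} (ha : Tendsto (fun k => x (p k)) atTop (𝓝 a))
      (hb : Tendsto (fun k => x (q k)) atTop (𝓝 b)) : b - a ∈ F :=
    hF.mem_of_tendsto (hb.sub ha) (Eventually.of_forall hmem)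
  rcases eventually_le_or_eventually_lt_of_tendsto hpmono hps with hp | hp
  · have hq : ∀ᶠ k in atTop, s ≤ q k := hp.mono fun k hk => hk.trans (hpq k).le
    have h := limit_mem (right_limit hps hp) (right_limit hqs hq)
    exact absurd (sub_self (x s) ▸ h) hF0
  · obtain ⟨n, hn⟩ := hp.exists
    have hspos : 0 < s := (hp0 n).trans hn
    have left_limit {u : ℕ → ℝ} (hu : Tendsto u atTop (𝓝 s)) (h : ∀ᶠ k in atTop, u k < s) :
        Tendsto (fun k => x (u k)) atTop (𝓝 (xm s)) :=
      (hll s hspos).comp (tendsto_nhdsWithin_iff.2 ⟨hu, h⟩)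
    rcases eventually_le_or_eventually_lt_of_tendsto hqmono hqs with hq | hq
    · obtain ⟨m, hm⟩ := hq.exists
      exact ⟨s, hspos, hm.trans_lt (hqt m), hps, hqs, left_limit hps hp, right_limit hqs hq,
        limit_mem (left_limit hps hp) (right_limit hqs hq)⟩
    · have h := limit_mem (left_limit hps hp) (left_limit hqs hq)
      exact absurd (sub_self (xm s) ▸ h) hF0
end
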